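/- arXiv:1203.5979 — 4 statements merged into one kernel-verified Lean document; each statement's English description precedes it below -/
import Mathlib

section
/- Let u solve the Goursat problem, with first partial derivatives bounded on D and ψ′, φ′ bounded. Set N_α = sup_{(x,y)∈D̄}|N(u(x,y))| and A = √( [sup|ψ′| + Y(sup_{D̄}|f| + N_α·sup_{D̄}|u|)]² + [sup|φ′| + X(sup_{D̄}|f| + N_α·sup_{D̄}|u|)]² ). Then for every mesh and every cell index (i,j), and every (x,y) in the closed cell P̄_{i,j}: |u(x,y) − u(x_{i−1}, y_{j−1})| ≤ A·h, where h = √(h₁² + h₂²). -/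
open Set

noncomputable section

/-- The closed domain `D̄ = [0,X] × [0,Y]`. -/
def clD (X Y : ℝ) : Set (ℝ × ℝ) := Icc 0 X ×ˢ Icc 0 Y

/-- The open domain `D = (0,X) × (0,Y)`. -/
def opD (X Y : ℝ) : Set (ℝ × ℝ) := Ioo 0 X ×ˢ Ioo 0 Y

/-- Partial derivative in the first variable. -/
def pdx (u : ℝ × ℝ → ℝ) (p : ℝ × ℝ) : ℝ := deriv (fun t => u (t, p.2)) p.1

/-- Partial derivative in the second variable. -/
def pdy (u : ℝ × ℝ → ℝ) (p : ℝ × ℝ) : ℝ := deriv (fun t => u (p.1, t)) p.2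

/-- Mixed partial derivative `∂²u/∂x∂y` (derivative in `y` of the derivative in `x`). -/
def pdxy (u : ℝ × ℝ → ℝ) (p : ℝ × ℝ) : ℝ := pdy (pdx u) p

/-- The open mesh cell `P_{i,j} = (x_{i-1}, x_i) × (y_{j-1}, y_j)`, where
`x_i = i·(X/N₁)`, `y_j = j·(Y/N₂)`. -/
def cellOp (X Y : ℝ) (N₁ N₂ : ℕ) (i j : ℕ) : Set (ℝ × ℝ) :=
  Ioo (((i : ℝ) - 1) * (X / N₁)) ((i : ℝ) * (X / N₁)) ×ˢ
    Ioo (((j : ℝ) - 1) * (Y / N₂)) ((j : ℝ) * (Y / N₂))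

/-- The closed mesh cell `P̄_{i,j} = [x_{i-1}, x_i] × [y_{j-1}, y_j]`. -/
def cellCl (X Y : ℝ) (N₁ N₂ : ℕ) (i j : ℕ) : Set (ℝ × ℝ) :=
  Icc (((i : ℝ) - 1) * (X / N₁)) ((i : ℝ) * (X / N₁)) ×ˢ
    Icc (((j : ℝ) - 1) * (Y / N₂)) ((j : ℝ) * (Y / N₂))

/-- The lower-left corner `(x_{i-1}, y_{j-1})` of the cell `P_{i,j}`. -/
def meshNode (X Y : ℝ) (N₁ N₂ : ℕ) (i j : ℕ) : ℝ × ℝ :=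
  (((i : ℝ) - 1) * (X / N₁), ((j : ℝ) - 1) * (Y / N₂))

/-- `h = √(h₁² + h₂²)`, with `h₁ = X/N₁`, `h₂ = Y/N₂`. -/
def meshH (X Y : ℝ) (N₁ N₂ : ℕ) : ℝ := Real.sqrt ((X / N₁) ^ 2 + (Y / N₂) ^ 2)

/-- `u` solves the Goursat problem `∂²u/∂x∂y + N(u)·u = f` on `D`,
`u(x,0) = ψ(x)`, `u(0,y) = φ(y)`, with the regularity stated in the paper. -/
structure GoursatSol (X Y : ℝ) (N : ℝ → ℝ) (f : ℝ × ℝ → ℝ) (ψ φ : ℝ → ℝ)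
    (u : ℝ × ℝ → ℝ) : Prop where
  cont : ContinuousOn u (clD X Y)
  diffx : ∀ p ∈ opD X Y, DifferentiableAt ℝ (fun t => u (t, p.2)) p.1
  diffy : ∀ p ∈ opD X Y, DifferentiableAt ℝ (fun t => u (p.1, t)) p.2
  diffxy : ∀ p ∈ opD X Y, DifferentiableAt ℝ (fun t => pdx u (p.1, t)) p.2
  contx : ContinuousOn (pdx u) (opD X Y)
  conty : ContinuousOn (pdy u) (opD X Y)
  contxy : ContinuousOn (pdxy u) (opD X Y)
  eqn : ∀ p ∈ opD X Y, pdxy u p + N (u p) * u p = f p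
  bc1 : ∀ x ∈ Icc (0 : ℝ) X, u (x, 0) = ψ x
  bc2 : ∀ y ∈ Icc (0 : ℝ) Y, u (0, y) = φ y

/-- The constant
`A = √([sup|ψ′| + Y(sup|f| + N_α·sup|u|)]² + [sup|φ′| + X(sup|f| + N_α·sup|u|)]²)`,
where `N_α = sup_{D̄} |N(u)|`. -/
def constA (X Y : ℝ) (N : ℝ → ℝ) (f : ℝ × ℝ → ℝ) (ψ φ : ℝ → ℝ) (u : ℝ × ℝ → ℝ) : ℝ :=
  Real.sqrt
    (((⨆ x ∈ Ioo (0 : ℝ) X, |deriv ψ x|) +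
        Y * ((⨆ p ∈ clD X Y, |f p|) + (⨆ p ∈ clD X Y, |N (u p)|) * ⨆ p ∈ clD X Y, |u p|)) ^ 2 +
      ((⨆ y ∈ Ioo (0 : ℝ) Y, |deriv φ y|) +
        X * ((⨆ p ∈ clD X Y, |f p|) + (⨆ p ∈ clD X Y, |N (u p)|) * ⨆ p ∈ clD X Y, |u p|)) ^ 2)

lemma le_bsup_aux {α : Type*} (S : Set α) (g : α → ℝ) (hg : ∀ a, 0 ≤ g a)
    (hb : BddAbove (g '' S)) {a : α} (ha : a ∈ S) : g a ≤ ⨆ x ∈ S, g x := by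
  obtain ⟨M, hM⟩ := hb
  have key : ∀ x, (⨆ (_ : x ∈ S), g x) ≤ M := by
    intro x
    by_cases hx : x ∈ S
    · rw [ciSup_pos hx]
      exact hM ⟨x, hx, rfl⟩
    · have : IsEmpty (x ∈ S) := ⟨hx⟩
      rw [Real.iSup_of_isEmpty]
      exact (hg a).trans (hM ⟨a, ha, rfl⟩)
  have h2 : (⨆ (_ : a ∈ S), g a) ≤ ⨆ x ∈ S, g x :=
    le_ciSup (f := fun x => ⨆ (_ : x ∈ S), g x) ⟨M, by rintro _ ⟨x, rfl⟩; exact key x⟩ a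
  rwa [ciSup_pos ha] at h2

lemma bsup_nonneg_aux {α : Type*} (S : Set α) (g : α → ℝ) (hg : ∀ a, 0 ≤ g a) :
    0 ≤ ⨆ x ∈ S, g x :=
  Real.iSup_nonneg fun x => Real.iSup_nonneg fun _ => hg x

lemma lip_open_aux {X C : ℝ} {g : ℝ → ℝ} (hd : ∀ x ∈ Ioo (0 : ℝ) X, DifferentiableAt ℝ g x)
    (hC : ∀ x ∈ Ioo (0 : ℝ) X, |deriv g x| ≤ C) :
    ∀ a ∈ Ioo (0 : ℝ) X, ∀ b ∈ Ioo (0 : ℝ) X, |g b - g a| ≤ C * |b - a| := by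
  intro a ha b hb
  have := Convex.norm_image_sub_le_of_norm_deriv_le (f := g) (C := C) (s := Ioo (0 : ℝ) X)
    hd (by simpa using hC) (convex_Ioo 0 X) ha hb
  simpa using this

lemma lip_closed_aux {X C : ℝ} (hX : 0 < X) {g : ℝ → ℝ} (hc : ContinuousOn g (Icc 0 X))
    (hd : ∀ x ∈ Ioo (0 : ℝ) X, DifferentiableAt ℝ g x)
    (hC : ∀ x ∈ Ioo (0 : ℝ) X, |deriv g x| ≤ C) :
    ∀ a ∈ Icc (0 : ℝ) X, ∀ b ∈ Icc (0 : ℝ) X, |g b - g a| ≤ C * |b - a| := by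
  intro a ha b hb
  have hcl : closure (Ioo (0 : ℝ) X ×ˢ Ioo (0 : ℝ) X) = Icc 0 X ×ˢ Icc 0 X := by
    rw [closure_prod_eq, closure_Ioo hX.ne]
  have h1 : ContinuousOn (fun q : ℝ × ℝ => g q.1) (Icc 0 X ×ˢ Icc 0 X) :=
    hc.comp continuousOn_fst fun q hq => hq.1
  have h2 : ContinuousOn (fun q : ℝ × ℝ => g q.2) (Icc 0 X ×ˢ Icc 0 X) :=
    hc.comp continuousOn_snd fun q hq => hq.2
  refine le_on_closure (f := fun q : ℝ × ℝ => |g q.2 - g q.1|)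
    (g := fun q : ℝ × ℝ => C * |q.2 - q.1|) (s := Ioo (0 : ℝ) X ×ˢ Ioo (0 : ℝ) X) (x := (a, b))
    (fun q hq => lip_open_aux hd hC _ hq.1 _ hq.2) ?_ ?_ ?_
  · rw [hcl]; exact (h2.sub h1).abs
  · fun_prop
  · rw [hcl]; exact ⟨ha, hb⟩

/-- Double difference estimate on the closed rectangle. -/
lemma dd_aux {X Y K : ℝ} (hX : 0 < X) (hY : 0 < Y) {u : ℝ × ℝ → ℝ}
    (hc : ContinuousOn u (clD X Y))
    (hdx : ∀ p ∈ opD X Y, DifferentiableAt ℝ (fun t => u (t, p.2)) p.1)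
    (hdxy : ∀ p ∈ opD X Y, DifferentiableAt ℝ (fun t => pdx u (p.1, t)) p.2)
    (hK : ∀ p ∈ opD X Y, |pdxy u p| ≤ K) :
    ∀ a ∈ Icc (0 : ℝ) X, ∀ b ∈ Icc (0 : ℝ) X, ∀ c ∈ Icc (0 : ℝ) Y, ∀ d ∈ Icc (0 : ℝ) Y,
      |(u (b, d) - u (b, c)) - (u (a, d) - u (a, c))| ≤ K * |d - c| * |b - a| := by
  have hopen : ∀ a ∈ Ioo (0 : ℝ) X, ∀ b ∈ Ioo (0 : ℝ) X, ∀ c ∈ Ioo (0 : ℝ) Y,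
      ∀ d ∈ Ioo (0 : ℝ) Y,
      |(u (b, d) - u (b, c)) - (u (a, d) - u (a, c))| ≤ K * |d - c| * |b - a| := by
    intro a ha b hb c hcc d hd
    refine lip_open_aux (g := fun x => u (x, d) - u (x, c)) (X := X) ?_ ?_ a ha b hb
    · intro x hx
      exact (hdx (x, d) ⟨hx, hd⟩).sub (hdx (x, c) ⟨hx, hcc⟩)
    · intro x hx
      have e : deriv (fun x => u (x, d) - u (x, c)) x = pdx u (x, d) - pdx u (x, c) :=
        deriv_fun_sub (hdx (x, d) ⟨hx, hd⟩) (hdx (x, c) ⟨hx, hcc⟩)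
      rw [e]
      exact lip_open_aux (g := fun t => pdx u (x, t)) (X := Y)
        (fun t ht => hdxy (x, t) ⟨hx, ht⟩) (fun t ht => hK (x, t) ⟨hx, ht⟩) c hcc d hd
  intro a ha b hb c hcc d hd
  set S : Set ((ℝ × ℝ) × (ℝ × ℝ)) :=
    (Ioo (0 : ℝ) X ×ˢ Ioo (0 : ℝ) X) ×ˢ (Ioo (0 : ℝ) Y ×ˢ Ioo (0 : ℝ) Y) with hS
  have hcl : closure S = (Icc 0 X ×ˢ Icc 0 X) ×ˢ (Icc 0 Y ×ˢ Icc 0 Y) := by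
    rw [hS, closure_prod_eq, closure_prod_eq, closure_prod_eq, closure_Ioo hX.ne,
      closure_Ioo hY.ne]
  refine le_on_closure
    (f := fun q : (ℝ × ℝ) × (ℝ × ℝ) =>
      |(u (q.1.2, q.2.2) - u (q.1.2, q.2.1)) - (u (q.1.1, q.2.2) - u (q.1.1, q.2.1))|)
    (g := fun q : (ℝ × ℝ) × (ℝ × ℝ) => K * |q.2.2 - q.2.1| * |q.1.2 - q.1.1|)
    (s := S) (x := ((a, b), (c, d)))
    (fun q hq => hopen _ hq.1.1 _ hq.1.2 _ hq.2.1 _ hq.2.2) ?_ ?_ ?_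
  · rw [hcl]
    refine ContinuousOn.abs (ContinuousOn.sub (ContinuousOn.sub ?_ ?_) (ContinuousOn.sub ?_ ?_))
    · exact hc.comp (f := fun q : (ℝ × ℝ) × (ℝ × ℝ) => (q.1.2, q.2.2)) (by fun_prop)
        fun q hq => ⟨hq.1.2, hq.2.2⟩
    · exact hc.comp (f := fun q : (ℝ × ℝ) × (ℝ × ℝ) => (q.1.2, q.2.1)) (by fun_prop)
        fun q hq => ⟨hq.1.2, hq.2.1⟩
    · exact hc.comp (f := fun q : (ℝ × ℝ) × (ℝ × ℝ) => (q.1.1, q.2.2)) (by fun_prop)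
        fun q hq => ⟨hq.1.1, hq.2.2⟩
    · exact hc.comp (f := fun q : (ℝ × ℝ) × (ℝ × ℝ) => (q.1.1, q.2.1)) (by fun_prop)
        fun q hq => ⟨hq.1.1, hq.2.1⟩
  · fun_prop
  · rw [hcl]; exact ⟨⟨ha, hb⟩, ⟨hcc, hd⟩⟩

lemma series_bdd_aux {ν : ℕ → ℝ} {N : ℝ → ℝ}
    (hN : ∀ v : ℝ, HasSum (fun s : ℕ => ν s * v ^ s) (N v)) (M : ℝ) :
    ∃ B, ∀ v, |v| ≤ M → |N v| ≤ B := by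
  have hs := (hN M).summable.abs
  refine ⟨∑' s, |ν s * M ^ s|, fun v hv => ?_⟩
  rw [← Real.norm_eq_abs, ← (hN v).tsum_eq]
  refine tsum_of_norm_bounded hs.hasSum fun s => ?_
  rw [Real.norm_eq_abs, abs_mul, abs_mul, abs_pow, abs_pow]
  exact mul_le_mul_of_nonneg_left
    (pow_le_pow_left₀ (abs_nonneg v) (hv.trans (le_abs_self M)) s) (abs_nonneg _)

lemma cs_aux {B C a b x y : ℝ} (hB : 0 ≤ B) (hC : 0 ≤ C) (hx : |x| ≤ a) (hy : |y| ≤ b) :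
    B * |x| + C * |y| ≤ Real.sqrt (B ^ 2 + C ^ 2) * Real.sqrt (a ^ 2 + b ^ 2) := by
  have h1 : B * |x| + C * |y| ≤ B * a + C * b := by gcongr
  refine h1.trans ?_
  rw [← Real.sqrt_mul (by positivity)]
  apply Real.le_sqrt_of_sq_le
  nlinarith [sq_nonneg (B * b - C * a)]

/-- If the solution `u` of the Goursat problem has bounded first
partial derivatives and `ψ′, φ′` are bounded, then for every mesh, every cell and every
point `(x,y)` of the closed cell `P̄_{i,j}`:
`|u(x,y) − u(x_{i−1}, y_{j−1})| ≤ A·h`. -/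
theorem lower_left_corner_estimate
    (X Y : ℝ) (hX : 0 < X) (hY : 0 < Y)
    (ν : ℕ → ℝ) (N : ℝ → ℝ)
    (hN : ∀ v : ℝ, HasSum (fun s : ℕ => ν s * v ^ s) (N v))
    (f : ℝ × ℝ → ℝ) (hf : ContinuousOn f (clD X Y))
    (ψ φ : ℝ → ℝ)
    (hψc : ContinuousOn ψ (Icc 0 X))
    (hψd : ∀ x ∈ Ioo (0 : ℝ) X, DifferentiableAt ℝ ψ x)
    (hφc : ContinuousOn φ (Icc 0 Y))
    (hφd : ∀ y ∈ Ioo (0 : ℝ) Y, DifferentiableAt ℝ φ y)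
    (hcomp : ψ 0 = φ 0)
    (u : ℝ × ℝ → ℝ) (hu : GoursatSol X Y N f ψ φ u)
    (hxext : ContinuousOn (pdx u) (Ioo 0 X ×ˢ Ico 0 Y))
    (hyext : ContinuousOn (pdy u) (Ico 0 X ×ˢ Ioo 0 Y))
    (hbx : BddAbove ((fun p => |pdx u p|) '' opD X Y))
    (hby : BddAbove ((fun p => |pdy u p|) '' opD X Y))
    (hbψ : BddAbove ((fun x => |deriv ψ x|) '' Ioo 0 X))
    (hbφ : BddAbove ((fun y => |deriv φ y|) '' Ioo 0 Y)) :
    ∀ N₁ N₂ : ℕ, 1 ≤ N₁ → 1 ≤ N₂ →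
      ∀ i ∈ Finset.Icc 1 N₁, ∀ j ∈ Finset.Icc 1 N₂, ∀ p ∈ cellCl X Y N₁ N₂ i j,
        |u p - u (meshNode X Y N₁ N₂ i j)| ≤
          constA X Y N f ψ φ u * meshH X Y N₁ N₂ := by
  intro N₁ N₂ hN₁ hN₂ i hi j hj p hp
  have hcomp' : IsCompact (clD X Y) := isCompact_Icc.prod isCompact_Icc
  have hbf : BddAbove ((fun p => |f p|) '' clD X Y) := hcomp'.bddAbove_image hf.abs
  have hbu : BddAbove ((fun p => |u p|) '' clD X Y) := hcomp'.bddAbove_image hu.cont.abs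
  have hbN : BddAbove ((fun p => |N (u p)|) '' clD X Y) := by
    obtain ⟨M, hM⟩ := hbu
    obtain ⟨B, hB⟩ := series_bdd_aux hN M
    refine ⟨B, ?_⟩
    rintro _ ⟨q, hq, rfl⟩
    exact hB _ (hM ⟨q, hq, rfl⟩)
  unfold constA meshH
  have lf := fun q (hq : q ∈ clD X Y) =>
    le_bsup_aux (clD X Y) (fun p => |f p|) (fun _ => abs_nonneg _) hbf hq
  have lu := fun q (hq : q ∈ clD X Y) =>
    le_bsup_aux (clD X Y) (fun p => |u p|) (fun _ => abs_nonneg _) hbu hq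
  have lN := fun q (hq : q ∈ clD X Y) =>
    le_bsup_aux (clD X Y) (fun p => |N (u p)|) (fun _ => abs_nonneg _) hbN hq
  have lψ := fun q (hq : q ∈ Ioo 0 X) =>
    le_bsup_aux (Ioo 0 X) (fun x => |deriv ψ x|) (fun _ => abs_nonneg _) hbψ hq
  have lφ := fun q (hq : q ∈ Ioo 0 Y) =>
    le_bsup_aux (Ioo 0 Y) (fun x => |deriv φ x|) (fun _ => abs_nonneg _) hbφ hq
  have nf := bsup_nonneg_aux (clD X Y) (fun p => |f p|) (fun _ => abs_nonneg _)
  have nu := bsup_nonneg_aux (clD X Y) (fun p => |u p|) (fun _ => abs_nonneg _)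
  have nN := bsup_nonneg_aux (clD X Y) (fun p => |N (u p)|) (fun _ => abs_nonneg _)
  have nψ := bsup_nonneg_aux (Ioo 0 X) (fun x => |deriv ψ x|) (fun _ => abs_nonneg _)
  have nφ := bsup_nonneg_aux (Ioo 0 Y) (fun x => |deriv φ x|) (fun _ => abs_nonneg _)
  generalize (⨆ p ∈ clD X Y, |f p|) = F at *
  generalize (⨆ p ∈ clD X Y, |u p|) = U at *
  generalize (⨆ p ∈ clD X Y, |N (u p)|) = NA at *
  generalize (⨆ x ∈ Ioo (0 : ℝ) X, |deriv ψ x|) = P at *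
  generalize (⨆ y ∈ Ioo (0 : ℝ) Y, |deriv φ y|) = Q at *
  have hK : ∀ q ∈ opD X Y, |pdxy u q| ≤ F + NA * U := by
    intro q hq
    have hq' : q ∈ clD X Y := ⟨Ioo_subset_Icc_self hq.1, Ioo_subset_Icc_self hq.2⟩
    have e : pdxy u q = f q - N (u q) * u q := by linarith [hu.eqn q hq]
    rw [e]
    refine (abs_sub _ _).trans ?_
    rw [abs_mul]
    have := mul_le_mul (lN q hq') (lu q hq') (abs_nonneg _) nN
    linarith [lf q hq']
  have hK0 : 0 ≤ F + NA * U := by positivity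
  generalize F + NA * U = K at *
  have dd := dd_aux hX hY hu.cont hu.diffx hu.diffxy hK
  have Lψ := lip_closed_aux hX hψc hψd lψ
  have Lφ := lip_closed_aux hY hφc hφd lφ
  have z1 : (0 : ℝ) ∈ Icc (0 : ℝ) X := ⟨le_rfl, hX.le⟩
  have z2 : (0 : ℝ) ∈ Icc (0 : ℝ) Y := ⟨le_rfl, hY.le⟩
  have Lx : ∀ a ∈ Icc (0 : ℝ) X, ∀ b ∈ Icc (0 : ℝ) X, ∀ d ∈ Icc (0 : ℝ) Y,
      |u (b, d) - u (a, d)| ≤ (P + Y * K) * |b - a| := by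
    intro a ha b hb d hd
    have h1 := dd a ha b hb 0 z2 d hd
    have h2 := Lψ a ha b hb
    rw [← hu.bc1 a ha, ← hu.bc1 b hb] at h2
    have h3 : K * |d - 0| * |b - a| ≤ Y * K * |b - a| := by
      rw [sub_zero, abs_of_nonneg hd.1, mul_comm Y K]
      gcongr
      exact hd.2
    have e : u (b, d) - u (a, d) = ((u (b, d) - u (b, 0)) - (u (a, d) - u (a, 0)))
      + (u (b, 0) - u (a, 0)) := by ring
    rw [e]
    refine (abs_add_le _ _).trans ?_
    linarith
  have Ly : ∀ a ∈ Icc (0 : ℝ) X, ∀ c ∈ Icc (0 : ℝ) Y, ∀ d ∈ Icc (0 : ℝ) Y,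
      |u (a, d) - u (a, c)| ≤ (Q + X * K) * |d - c| := by
    intro a ha c hc d hd
    have h1 := dd 0 z1 a ha c hc d hd
    have h2 := Lφ c hc d hd
    rw [← hu.bc2 c hc, ← hu.bc2 d hd] at h2
    have h3 : K * |d - c| * |a - 0| ≤ X * K * |d - c| := by
      rw [sub_zero, abs_of_nonneg ha.1, mul_comm _ a, ← mul_assoc]
      gcongr
      exact ha.2
    have e : u (a, d) - u (a, c) = ((u (a, d) - u (a, c)) - (u (0, d) - u (0, c)))
      + (u (0, d) - u (0, c)) := by ring
    rw [e]
    refine (abs_add_le _ _).trans ?_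
    linarith
  have mesh : ∀ (Z : ℝ), 0 < Z → ∀ n k : ℕ, 1 ≤ n → k ∈ Finset.Icc 1 n →
      ∀ t ∈ Icc (((k : ℝ) - 1) * (Z / n)) ((k : ℝ) * (Z / n)),
      ((k : ℝ) - 1) * (Z / n) ∈ Icc 0 Z ∧ t ∈ Icc 0 Z ∧
        |t - ((k : ℝ) - 1) * (Z / n)| ≤ Z / n := by
    intro Z hZ n k hn hk t ht
    rw [Finset.mem_Icc] at hk
    have hn' : (0 : ℝ) < n := by exact_mod_cast hn
    have k1 : (1 : ℝ) ≤ k := by exact_mod_cast hk.1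
    have k2 : (k : ℝ) ≤ n := by exact_mod_cast hk.2
    have hq : 0 < Z / n := by positivity
    have e : (n : ℝ) * (Z / n) = Z := by field_simp
    have l1 : 0 ≤ ((k : ℝ) - 1) * (Z / n) := mul_nonneg (by linarith) hq.le
    have l2 : (k : ℝ) * (Z / n) ≤ Z := by
      calc (k : ℝ) * (Z / n) ≤ n * (Z / n) := by gcongr
        _ = Z := e
    obtain ⟨t1, t2⟩ := ht
    refine ⟨⟨l1, by linarith⟩, ⟨by linarith, by linarith⟩, ?_⟩
    rw [abs_of_nonneg (by linarith)]
    linarith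
  obtain ⟨x, y⟩ := p
  obtain ⟨mx1, mx2, mx3⟩ := mesh X hX N₁ i hN₁ hi x hp.1
  obtain ⟨my1, my2, my3⟩ := mesh Y hY N₂ j hN₂ hj y hp.2
  unfold meshNode
  have h1 := Lx _ mx1 x mx2 y my2
  have h2 := Ly _ mx1 _ my1 y my2
  refine le_trans ?_ (cs_aux (B := P + Y * K) (C := Q + X * K) (by positivity) (by positivity)
    mx3 my3)
  refine le_trans (abs_sub_le _ (u (((i : ℝ) - 1) * (X / N₁), y)) _) ?_
  linarith
end
end

section
/- Let N₁, N₂ ≥ 1 be integers, h₂ > 0, Y > 0 with (N₂ − 1)·h₂ ≤ Y, let a ≥ 1 and γ, β, c ≥ 0. Let U_{i,j} ≥ 0 (i ∈ {0,…,N₁}, j ∈ {0,…,N₂}) satisfy U_{0,j} = U_{i,0} = 0 and, for all i, j ≥ 1, U_{i,j} ≤ a·U_{i−1,j} + γ·U_{i,j−1} + β·h₂·Σ_{s=1}^{j−1} U_{i,s} + c. Define μ_{i,j} by μ_{0,j} = μ_{i,0} = 0 and μ_{i,j} = a·μ_{i−1,j} + (γ + β·Y)·μ_{i,j−1} + c for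 i, j ≥ 1. Then U_{i,j} ≤ μ_{i,j} for all i ∈ {0,…,N₁}, j ∈ {0,…,N₂}. -/
/-- Discrete comparison principle: a doubly indexed nonnegative
sequence `U` satisfying the two-dimensional Gronwall-type inequality with summed
history term is dominated by the solution `μ` of the corresponding linear recurrence
`μ_{i,j} = a·μ_{i−1,j} + (γ + β·Y)·μ_{i,j−1} + c`. -/
theorem discrete_comparison (N₁ N₂ : ℕ) (hN₁ : 1 ≤ N₁) (hN₂ : 1 ≤ N₂)
    (h₂ Y : ℝ) (hh₂ : 0 < h₂) (hY : 0 < Y) (hN₂Y : ((N₂ : ℝ) - 1) * h₂ ≤ Y)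
    (a γ β c : ℝ) (ha : 1 ≤ a) (hγ : 0 ≤ γ) (hβ : 0 ≤ β) (hc : 0 ≤ c)
    (U μ : ℕ → ℕ → ℝ)
    (hUnn : ∀ i ≤ N₁, ∀ j ≤ N₂, 0 ≤ U i j)
    (hU0 : ∀ j ≤ N₂, U 0 j = 0) (hU0' : ∀ i ≤ N₁, U i 0 = 0)
    (hUrec : ∀ i j : ℕ, 1 ≤ i → i ≤ N₁ → 1 ≤ j → j ≤ N₂ →
      U i j ≤ a * U (i - 1) j + γ * U i (j - 1)
        + β * h₂ * ∑ s ∈ Finset.Icc 1 (j - 1), U i s + c)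
    (hμ0 : ∀ j, μ 0 j = 0) (hμ0' : ∀ i, μ i 0 = 0)
    (hμrec : ∀ i j : ℕ, 1 ≤ i → 1 ≤ j →
      μ i j = a * μ (i - 1) j + (γ + β * Y) * μ i (j - 1) + c) :
    ∀ i ≤ N₁, ∀ j ≤ N₂, U i j ≤ μ i j := by
  have hb : 0 ≤ γ + β * Y := by positivity
  have ha0 : 0 ≤ a := by linarith
  have hrec : ∀ i j, μ (i+1) (j+1) = a * μ i (j+1) + (γ + β * Y) * μ (i+1) j + c := by
    intro i j
    simpa using hμrec (i+1) (j+1) (by omega) (by omega)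
  have hnn : ∀ i j, 0 ≤ μ i j := by
    intro i
    induction i with
    | zero => intro j; rw [hμ0]
    | succ i ih =>
      intro j
      induction j with
      | zero => rw [hμ0']
      | succ j ihj =>
        rw [hrec]
        have := mul_nonneg ha0 (ih (j+1))
        have := mul_nonneg hb ihj
        linarith
  have hstep : ∀ i j, μ i j ≤ μ i (j+1) := by
    intro i
    induction i with
    | zero => intro j; rw [hμ0, hμ0]
    | succ i ih =>
      intro j
      induction j with
      | zero => rw [hμ0']; exact hnn _ _
      | succ j ihj =>
        rw [hrec i j, hrec i (j+1)]
        have := mul_le_mul_of_nonneg_left (ih (j+1)) ha0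
        have := mul_le_mul_of_nonneg_left ihj hb
        linarith
  have hmono : ∀ i, Monotone (μ i) := fun i => monotone_nat_of_le_succ (hstep i)
  intro i
  induction i with
  | zero => intro _ j hj; rw [hU0 j hj, hμ0]
  | succ i ih =>
    intro hi j
    induction j using Nat.strong_induction_on with
    | _ j ihj =>
      intro hj
      rcases j with _ | j
      · rw [hU0' _ hi, hμ0']
      · have h := hUrec (i+1) (j+1) (by omega) hi (by omega) hj
        simp only [Nat.add_sub_cancel] at h
        have h1 := mul_le_mul_of_nonneg_left (ih (by omega) (j+1) hj) ha0
        have h2 := mul_le_mul_of_nonneg_left (ihj j (by omega) (by omega)) hγ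
        have h3 : ∑ s ∈ Finset.Icc 1 j, U (i+1) s ≤ (j : ℝ) * μ (i+1) j := by
          have := Finset.sum_le_card_nsmul (Finset.Icc 1 j) (fun s => U (i+1) s) (μ (i+1) j)
            (fun s hs => by
              have hs' := Finset.mem_Icc.mp hs
              exact (ihj s (by omega) (by omega)).trans (hmono _ hs'.2))
          simpa using this
        have hjY : (j : ℝ) * h₂ ≤ Y := by
          have : (j : ℝ) + 1 ≤ N₂ := by exact_mod_cast hj
          exact (mul_le_mul_of_nonneg_right (by linarith) hh₂.le).trans hN₂Y
        have h4 := mul_le_mul_of_nonneg_left h3 (mul_nonneg hβ hh₂.le)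
        have h5 := mul_le_mul_of_nonneg_left hjY (mul_nonneg hβ (hnn (i+1) j))
        rw [hrec]
        linarith
end

section
/- Let N(u) = Σ_{s=0}^∞ ν_s u^s be an everywhere-convergent real power series, and let (v_k)_{k≥0} be a real sequence such that the power series g(z) = Σ_{k=0}^∞ v_k z^k has radius of convergence ρ > 0. Then for every real z with |z| < ρ, the series Σ_{n=0}^∞ A_n(N; v₀, …, v_n)·zⁿ converges absolutely and N(g(z)) = Σ_{n=0}^∞ A_n(N; v₀, …, v_n)·zⁿ. -/
open Set

noncomputable section

/-- The Adomian polynomial `Aₙ(g; v₀,…,vₙ) = (1/n!)·(dⁿ/dτⁿ)[g(Σ_{s=0}^n v_s τ^s)]|_{τ=0}`. -/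
def adomian (g : ℝ → ℝ) (n : ℕ) (v : ℕ → ℝ) : ℝ :=
  ((n.factorial : ℝ))⁻¹ *
    iteratedDeriv n (fun τ => g (∑ s ∈ Finset.range (n + 1), v s * τ ^ s)) 0

lemma ad_powser (v : ℕ → ℝ) (z : ℝ) (h : Summable (fun k : ℕ => v k * z ^ k)) (s : ℕ) :
    HasSum (fun n : ℕ => PowerSeries.coeff n ((PowerSeries.mk v) ^ s) * z ^ n)
      ((∑' k : ℕ, v k * z ^ k) ^ s) := by
  induction s with
  | zero =>
    have := hasSum_ite_eq (0 : ℕ) (1 : ℝ)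
    convert this using 2 with n
    · rw [pow_zero, PowerSeries.coeff_one]
      split_ifs with hn
      · simp [hn]
      · simp
    · simp
  | succ s ih =>
    have h1 := ih.summable.norm
    have h2 := h.norm
    have h3 := (summable_norm_sum_mul_antidiagonal_of_summable_norm h1 h2).of_norm.hasSum
    rw [← tsum_mul_tsum_eq_tsum_sum_antidiagonal_of_summable_norm h1 h2, ih.tsum_eq,
      ← pow_succ] at h3
    refine Eq.mp (congrArg (fun f => HasSum f _) (funext fun n => ?_)) h3
    symm
    rw [pow_succ, PowerSeries.coeff_mul, Finset.sum_mul]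
    refine Finset.sum_congr rfl fun p hp => ?_
    rw [Finset.HasAntidiagonal.mem_antidiagonal] at hp
    rw [PowerSeries.coeff_mk, ← hp, pow_add]
    ring

lemma ad_abs_le (v : ℕ → ℝ) (s : ℕ) : ∀ n : ℕ,
    |PowerSeries.coeff n ((PowerSeries.mk v) ^ s)| ≤
      PowerSeries.coeff n ((PowerSeries.mk (fun k => |v k|)) ^ s) := by
  induction s with
  | zero =>
    intro n
    rw [pow_zero, pow_zero, PowerSeries.coeff_one]
    split_ifs <;> simp
  | succ s ih =>
    intro n
    rw [pow_succ, pow_succ, PowerSeries.coeff_mul, PowerSeries.coeff_mul]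
    refine (Finset.abs_sum_le_sum_abs _ _).trans (Finset.sum_le_sum fun p _ => ?_)
    rw [abs_mul, PowerSeries.coeff_mk, PowerSeries.coeff_mk]
    exact mul_le_mul_of_nonneg_right (ih _) (abs_nonneg _)

lemma ad_congr (v w : ℕ → ℝ) (n : ℕ) (h : ∀ m ≤ n, v m = w m) (s : ℕ) : ∀ m ≤ n,
    PowerSeries.coeff m ((PowerSeries.mk v) ^ s) =
      PowerSeries.coeff m ((PowerSeries.mk w) ^ s) := by
  induction s with
  | zero => intro m _; simp
  | succ s ih =>
    intro m hm
    rw [pow_succ, pow_succ, PowerSeries.coeff_mul, PowerSeries.coeff_mul]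
    refine Finset.sum_congr rfl fun p hp => ?_
    rw [Finset.HasAntidiagonal.mem_antidiagonal] at hp
    rw [PowerSeries.coeff_mk, PowerSeries.coeff_mk, ih _ (by omega), h _ (by omega)]

lemma ad_double (ν : ℕ → ℝ) (N : ℝ → ℝ)
    (hN : ∀ v : ℝ, HasSum (fun s : ℕ => ν s * v ^ s) (N v))
    (c C : ℕ → ℕ → ℝ) (hcC : ∀ s n, |c s n| ≤ C s n) (z g r : ℝ) (hr : 0 ≤ r)
    (hF : ∀ s, HasSum (fun n : ℕ => C s n * |z| ^ n) (r ^ s))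
    (hf : ∀ s, HasSum (fun n : ℕ => c s n * z ^ n) (g ^ s)) :
    HasSum (fun n : ℕ => (∑' s : ℕ, ν s * c s n) * z ^ n) (N g) := by
  have hC : ∀ s n, 0 ≤ C s n := fun s n => (abs_nonneg _).trans (hcC s n)
  have hdom : Summable (fun p : ℕ × ℕ => |ν p.1| * (C p.1 p.2 * |z| ^ p.2)) := by
    have hnn : 0 ≤ (fun p : ℕ × ℕ => |ν p.1| * (C p.1 p.2 * |z| ^ p.2)) := fun p =>
      mul_nonneg (abs_nonneg _) (mul_nonneg (hC _ _) (pow_nonneg (abs_nonneg _) _))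
    have hs : ∀ s, HasSum (fun n => |ν s| * (C s n * |z| ^ n)) (|ν s| * r ^ s) :=
      fun s => (hF s).mul_left (|ν s|)
    have hS : Summable (fun s : ℕ => |ν s| * r ^ s) := by
      simpa only [abs_mul, abs_pow, abs_of_nonneg hr] using (hN r).summable.abs
    refine (summable_prod_of_nonneg hnn).2 ⟨fun s => (hs s).summable, ?_⟩
    exact hS.congr fun s => (hs s).tsum_eq.symm
  have hsum : Summable (fun p : ℕ × ℕ => ν p.1 * (c p.1 p.2 * z ^ p.2)) := by
    refine Summable.of_norm_bounded hdom fun p => ?_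
    rw [Real.norm_eq_abs, abs_mul, abs_mul, abs_pow]
    gcongr
    exact hcC _ _
  have h1 := hsum.hasSum.prod_fiberwise fun s => (hf s).mul_left (ν s)
  have h2 := h1.unique (hN _)
  have h3 := (hsum.prod_symm).hasSum.prod_fiberwise
    fun n => (hsum.prod_symm.prod_factor n).hasSum
  have h4 : ∑' p : ℕ × ℕ, (fun p : ℕ × ℕ => ν p.1 * (c p.1 p.2 * z ^ p.2)) p.swap = N g := by
    rw [← h2]
    exact (Equiv.prodComm ℕ ℕ).tsum_eq (fun p : ℕ × ℕ => ν p.1 * (c p.1 p.2 * z ^ p.2))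
  rw [h4] at h3
  refine Eq.mp (congrArg (fun f => HasSum f _) (funext fun n => ?_)) h3
  rw [← tsum_mul_right]
  simp [mul_assoc]

lemma ad_comp (ν : ℕ → ℝ) (N : ℝ → ℝ)
    (hN : ∀ v : ℝ, HasSum (fun s : ℕ => ν s * v ^ s) (N v))
    (v : ℕ → ℝ) (z : ℝ) (h : Summable (fun k : ℕ => v k * z ^ k)) :
    HasSum (fun n : ℕ => (∑' s : ℕ, ν s * PowerSeries.coeff n ((PowerSeries.mk v) ^ s)) * z ^ n)
      (N (∑' k : ℕ, v k * z ^ k)) := by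
  have habs : Summable (fun k : ℕ => |v k| * |z| ^ k) := by
    simpa [abs_mul, abs_pow] using h.abs
  exact ad_double ν N hN (fun s n => PowerSeries.coeff n ((PowerSeries.mk v) ^ s))
    (fun s n => PowerSeries.coeff n ((PowerSeries.mk (fun k => |v k|)) ^ s))
    (ad_abs_le v) z _ _ (tsum_nonneg fun k => by positivity)
    (ad_powser _ _ habs) (ad_powser v z h)

lemma ad_eq (ν : ℕ → ℝ) (N : ℝ → ℝ)
    (hN : ∀ v : ℝ, HasSum (fun s : ℕ => ν s * v ^ s) (N v))
    (v : ℕ → ℝ) (n : ℕ) :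
    adomian N n v = ∑' s : ℕ, ν s * PowerSeries.coeff n ((PowerSeries.mk v) ^ s) := by
  let w : ℕ → ℝ := fun k => if k ∈ Finset.range (n + 1) then v k else 0
  have hw : ∀ z : ℝ, HasSum (fun k => w k * z ^ k) (∑ s ∈ Finset.range (n + 1), v s * z ^ s) := by
    intro z
    have : ∑ s ∈ Finset.range (n + 1), v s * z ^ s = ∑ s ∈ Finset.range (n + 1), w s * z ^ s :=
      Finset.sum_congr rfl fun s hs => by simp only [w, if_pos hs]
    rw [this]
    exact hasSum_sum_of_ne_finset_zero fun s hs => by simp only [w, if_neg hs, zero_mul]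
  set a : ℕ → ℝ := fun m => ∑' s : ℕ, ν s * PowerSeries.coeff m ((PowerSeries.mk w) ^ s) with ha
  set f : ℝ → ℝ := fun τ => N (∑ s ∈ Finset.range (n + 1), v s * τ ^ s) with hf
  have hfa : HasFPowerSeriesAt f (FormalMultilinearSeries.ofScalars ℝ a) 0 := by
    rw [hasFPowerSeriesAt_iff]
    refine Filter.Eventually.of_forall fun z => ?_
    have := ad_comp ν N hN w z (hw z).summable
    rw [(hw z).tsum_eq] at this
    simpa [FormalMultilinearSeries.coeff_ofScalars, hf, ha, mul_comm] using this
  have h2 := hfa.analyticAt.hasFPowerSeriesAt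
  have h3 := congrArg (fun p => FormalMultilinearSeries.coeff p n)
    (hfa.eq_formalMultilinearSeries h2)
  simp only [FormalMultilinearSeries.coeff_ofScalars] at h3
  have h4 : a n = ∑' s : ℕ, ν s * PowerSeries.coeff n ((PowerSeries.mk v) ^ s) := by
    refine tsum_congr fun s => ?_
    rw [ad_congr w v n (fun m hm => ?_) s n le_rfl]
    simp only [w, if_pos (Finset.mem_range.2 (Nat.lt_succ_of_le hm))]
  rw [← h4, h3, adomian, div_eq_inv_mul]

/-- Generating identity for Adomian polynomials: if
`N(u) = Σ ν_s u^s` everywhere and `g(z) = Σ v_k z^k` has radius of convergence `ρ > 0`,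
then for every `|z| < ρ` the series `Σ Aₙ(N; v₀,…,vₙ) zⁿ` converges absolutely and
`N(g(z)) = Σ_{n=0}^∞ Aₙ(N; v₀,…,vₙ) zⁿ`. -/
theorem adomian_generating_identity (ν : ℕ → ℝ) (N : ℝ → ℝ)
    (hN : ∀ v : ℝ, HasSum (fun s : ℕ => ν s * v ^ s) (N v))
    (v : ℕ → ℝ) (ρ : ℝ) (hρ : 0 < ρ)
    (hconv : ∀ z : ℝ, |z| < ρ → Summable (fun k : ℕ => v k * z ^ k)) :
    ∀ z : ℝ, |z| < ρ →
      Summable (fun n : ℕ => |adomian N n v * z ^ n|) ∧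
      HasSum (fun n : ℕ => adomian N n v * z ^ n) (N (∑' k : ℕ, v k * z ^ k)) := by
  intro z hz
  have h := ad_comp ν N hN v z (hconv z hz)
  simp only [← ad_eq ν N hN] at h
  exact ⟨h.summable.abs, h⟩
end
end

section
/- Under the hypotheses of the approximation theorem for the basic problem (unique solution u of the Goursat problem; u⁰ the solution of the basic problem for a given mesh), there exist constants δ > 0 and M_u > 0, independent of the mesh parameters, such that for every mesh with h₁ ≤ δ and h₂ ≤ δ the solution u⁰ of the basic problem satisfies sup_{(x,y) ∈ D̄} |u⁰(x,y)| ≤ M_u. -/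
open Set

noncomputable section

/-- `u0` solves the basic problem: the Goursat problem with the nonlinear coefficient
frozen, on each open mesh cell `P_{i,j}`, at the value of the unknown at the lower-left
corner of that cell. -/
structure BasicSol (X Y : ℝ) (N : ℝ → ℝ) (f : ℝ × ℝ → ℝ) (ψ φ : ℝ → ℝ)
    (N₁ N₂ : ℕ) (u0 : ℝ × ℝ → ℝ) : Prop where
  cont : ContinuousOn u0 (clD X Y)
  diffx : ∀ i ∈ Finset.Icc 1 N₁, ∀ j ∈ Finset.Icc 1 N₂, ∀ p ∈ cellOp X Y N₁ N₂ i j,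
      DifferentiableAt ℝ (fun t => u0 (t, p.2)) p.1
  diffy : ∀ i ∈ Finset.Icc 1 N₁, ∀ j ∈ Finset.Icc 1 N₂, ∀ p ∈ cellOp X Y N₁ N₂ i j,
      DifferentiableAt ℝ (fun t => u0 (p.1, t)) p.2
  diffxy : ∀ i ∈ Finset.Icc 1 N₁, ∀ j ∈ Finset.Icc 1 N₂, ∀ p ∈ cellOp X Y N₁ N₂ i j,
      DifferentiableAt ℝ (fun t => pdx u0 (p.1, t)) p.2
  contx : ∀ i ∈ Finset.Icc 1 N₁, ∀ j ∈ Finset.Icc 1 N₂,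
      ContinuousOn (pdx u0) (cellOp X Y N₁ N₂ i j)
  conty : ∀ i ∈ Finset.Icc 1 N₁, ∀ j ∈ Finset.Icc 1 N₂,
      ContinuousOn (pdy u0) (cellOp X Y N₁ N₂ i j)
  contxy : ∀ i ∈ Finset.Icc 1 N₁, ∀ j ∈ Finset.Icc 1 N₂,
      ContinuousOn (pdxy u0) (cellOp X Y N₁ N₂ i j)
  eqn : ∀ i ∈ Finset.Icc 1 N₁, ∀ j ∈ Finset.Icc 1 N₂, ∀ p ∈ cellOp X Y N₁ N₂ i j,
      pdxy u0 p + N (u0 (meshNode X Y N₁ N₂ i j)) * u0 p = f p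
  bc1 : ∀ x ∈ Icc (0 : ℝ) X, u0 (x, 0) = ψ x
  bc2 : ∀ y ∈ Icc (0 : ℝ) Y, u0 (0, y) = φ y

/-- Monotonicity on a rectangle from nonnegativity of the mixed derivative. -/
theorem aux_cell (w wx wxy : ℝ × ℝ → ℝ) (a b c d : ℝ) (hab : a ≤ b) (hcd : c ≤ d)
    (hc : ContinuousOn w (Icc a b ×ˢ Icc c d))
    (h1 : ∀ x ∈ Ioo a b, ∀ y ∈ Ioo c d, HasDerivAt (fun t => w (t, y)) (wx (x, y)) x)
    (h2 : ∀ x ∈ Ioo a b, ∀ y ∈ Ioo c d, HasDerivAt (fun t => wx (x, t)) (wxy (x, y)) y)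
    (h3 : ∀ x ∈ Ioo a b, ∀ y ∈ Ioo c d, 0 ≤ wxy (x, y)) :
    w (b, c) - w (a, c) ≤ w (b, d) - w (a, d) := by
  rcases hcd.eq_or_lt with rfl | hcd
  · exact le_rfl
  have hcx : ∀ y ∈ Icc c d, ContinuousOn (fun t => w (t, y)) (Icc a b) := fun y hy =>
    hc.comp (by fun_prop) (fun t ht => ⟨ht, hy⟩)
  have hcy : ∀ x ∈ Icc a b, ContinuousOn (fun t => w (x, t)) (Icc c d) := fun x hx =>
    hc.comp (by fun_prop) (fun t ht => ⟨hx, ht⟩)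
  have hwx : ∀ x ∈ Ioo a b, MonotoneOn (fun t => wx (x, t)) (Ioo c d) := by
    intro x hx
    apply monotoneOn_of_deriv_nonneg (convex_Ioo c d)
    · intro y hy
      exact (h2 x hx y hy).continuousAt.continuousWithinAt
    · intro y hy
      rw [interior_Ioo] at hy
      exact (h2 x hx y hy).differentiableAt.differentiableWithinAt
    · intro y hy
      rw [interior_Ioo] at hy
      rw [(h2 x hx y hy).deriv]
      exact h3 x hx y hy
  have hint : MonotoneOn (fun y => w (b, y) - w (a, y)) (Ioo c d) := by
    intro y hy y' hy' hyy
    have hm : MonotoneOn (fun x => w (x, y') - w (x, y)) (Icc a b) := by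
      apply monotoneOn_of_deriv_nonneg (convex_Icc a b)
      · exact (hcx y' (Ioo_subset_Icc_self hy')).sub (hcx y (Ioo_subset_Icc_self hy))
      · intro x hx
        rw [interior_Icc] at hx
        exact ((h1 x hx y' hy').sub (h1 x hx y hy)).differentiableAt.differentiableWithinAt
      · intro x hx
        rw [interior_Icc] at hx
        have := ((h1 x hx y' hy').sub (h1 x hx y hy)).deriv
        have e : deriv (fun x => w (x, y') - w (x, y)) x = wx (x, y') - wx (x, y) := this
        rw [e]
        have := hwx x hx hy hy' hyy
        simp only at this
        linarith
    have := hm (left_mem_Icc.2 hab) (right_mem_Icc.2 hab) hab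
    simp only at this ⊢
    linarith
  have hk : ContinuousOn (fun y => w (b, y) - w (a, y)) (Icc c d) :=
    (hcy b (right_mem_Icc.2 hab)).sub (hcy a (left_mem_Icc.2 hab))
  have hcl : closure (Ioo c d) = Icc c d := closure_Ioo hcd.ne
  have s1 : ∀ y ∈ Ioo c d, w (b, c) - w (a, c) ≤ w (b, y) - w (a, y) := by
    intro y hy
    have hcl' : closure (Ioo c y) = Icc c y := closure_Ioo hy.1.ne
    have := ContinuousWithinAt.closure_le (s := Ioo c y) (x := c)
      (f := fun y => w (b, y) - w (a, y)) (g := fun _ => w (b, y) - w (a, y))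
      (by rw [hcl']; exact left_mem_Icc.2 hy.1.le)
      ((hk c (left_mem_Icc.2 hcd.le)).mono (fun t ht => ⟨ht.1.le, ht.2.le.trans hy.2.le⟩))
      continuousWithinAt_const
      (fun t ht => hint ⟨ht.1, ht.2.trans hy.2⟩ hy ht.2.le)
    exact this
  exact ContinuousWithinAt.closure_le (s := Ioo c d) (x := d)
      (g := fun y => w (b, y) - w (a, y)) (f := fun _ => w (b, c) - w (a, c))
      (by rw [hcl]; exact right_mem_Icc.2 hcd.le)
      continuousWithinAt_const
      ((hk d (right_mem_Icc.2 hcd.le)).mono Ioo_subset_Icc_self)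
      s1

/-- Gluing monotonicity along a one-dimensional grid. -/
theorem aux_grid (g : ℝ → ℝ) (h : ℝ) (hh : 0 ≤ h) (a : ℝ) (n : ℕ)
    (H : ∀ i ∈ Finset.Icc 1 n, ∀ s t : ℝ, ((i : ℝ) - 1) * h ≤ s → s ≤ t → t ≤ i * h → t ≤ a →
      g s ≤ g t) (k : ℕ) (hk : k ≤ n) :
    ∀ x, 0 ≤ x → x ≤ a → x ≤ k * h → g 0 ≤ g x := by
  induction k with
  | zero =>
    intro x h0 _ h1
    have : x = 0 := le_antisymm (by simpa using h1) h0
    rw [this]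
  | succ k ih =>
    intro x h0 ha h1
    rcases le_total x (k * h) with hx | hx
    · exact ih (by omega) x h0 ha hx
    · refine (ih (by omega) (k * h) (by positivity) (hx.trans ha) le_rfl).trans ?_
      exact H (k + 1) (Finset.mem_Icc.2 ⟨by omega, hk⟩) _ _ (by push_cast; simp) hx h1 ha

/-- Gluing the cell estimate over the mesh, inside the rectangle `[0,a] × [0,b]`. -/
theorem aux_mesh (w wx wxy : ℝ × ℝ → ℝ) (h₁ h₂ a b : ℝ) (hh1 : 0 ≤ h₁) (hh2 : 0 ≤ h₂)
    (N₁ N₂ : ℕ) (ha : 0 ≤ a) (hb : 0 ≤ b) (haN : a ≤ N₁ * h₁) (hbN : b ≤ N₂ * h₂)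
    (hc : ContinuousOn w (Icc 0 a ×ˢ Icc 0 b))
    (H : ∀ i ∈ Finset.Icc 1 N₁, ∀ j ∈ Finset.Icc 1 N₂, ∀ x y : ℝ,
      ((i : ℝ) - 1) * h₁ < x → x < i * h₁ → x < a →
      ((j : ℝ) - 1) * h₂ < y → y < j * h₂ → y < b →
      HasDerivAt (fun t => w (t, y)) (wx (x, y)) x ∧
      HasDerivAt (fun t => wx (x, t)) (wxy (x, y)) y ∧ 0 ≤ wxy (x, y)) :
    w (a, 0) - w (0, 0) ≤ w (a, b) - w (0, b) := by
  refine aux_grid (fun y => w (a, y) - w (0, y)) h₂ hh2 b N₂ ?_ N₂ le_rfl b hb le_rfl hbN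
  intro j hj c d hc1 hcd hd1 hd2
  have hj1 : (1 : ℝ) ≤ j := by exact_mod_cast (Finset.mem_Icc.1 hj).1
  have hc0 : 0 ≤ c := (mul_nonneg (by linarith) hh2).trans hc1
  have := aux_grid (fun x => w (x, d) - w (x, c)) h₁ hh1 a N₁ ?_ N₁ le_rfl a ha le_rfl haN
  · linarith
  intro i hi s t hs hst ht1 ht2
  have hi1 : (1 : ℝ) ≤ i := by exact_mod_cast (Finset.mem_Icc.1 hi).1
  have hs0 : 0 ≤ s := (mul_nonneg (by linarith) hh1).trans hs
  have HH := fun x (hx : x ∈ Ioo s t) y (hy : y ∈ Ioo c d) =>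
    H i hi j hj x y (hs.trans_lt hx.1) (hx.2.trans_le ht1) (hx.2.trans_le ht2)
      (hc1.trans_lt hy.1) (hy.2.trans_le hd1) (hy.2.trans_le hd2)
  have := aux_cell w wx wxy s t c d hst hcd
    (hc.mono (prod_mono (Icc_subset_Icc hs0 ht2) (Icc_subset_Icc hc0 hd2)))
    (fun x hx y hy => (HH x hx y hy).1) (fun x hx y hy => (HH x hx y hy).2.1)
    (fun x hx y hy => (HH x hx y hy).2.2)
  linarith

/-- An everywhere convergent power series is Lipschitz and bounded on bounded sets. -/
theorem aux_series (ν : ℕ → ℝ) (N : ℝ → ℝ)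
    (hN : ∀ v : ℝ, HasSum (fun s : ℕ => ν s * v ^ s) (N v)) (R : ℝ) (hR : 1 ≤ R) :
    ∃ L B : ℝ, 0 < L ∧ 0 < B ∧ (∀ a b, |a| ≤ R → |b| ≤ R → |N a - N b| ≤ L * |a - b|) ∧
      ∀ a, |a| ≤ R → |N a| ≤ B := by
  have hs : Summable (fun s : ℕ => |ν s| * (2 * R) ^ s) := by
    have := (hN (2 * R)).summable.abs
    refine this.congr (fun s => ?_)
    rw [abs_mul, abs_of_nonneg (by positivity : (0:ℝ) ≤ (2 * R) ^ s)]
  set L := ∑' s : ℕ, |ν s| * (2 * R) ^ s with hL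
  have hL0 : 0 ≤ L := tsum_nonneg (fun s => by positivity)
  have key : ∀ a b, |a| ≤ R → |b| ≤ R → |N a - N b| ≤ L * |a - b| := by
    intro a b ha hb
    have h1 := (hN a).sub (hN b)
    have h2 : HasSum (fun s : ℕ => |ν s| * (2 * R) ^ s * |a - b|) (L * |a - b|) :=
      hs.hasSum.mul_right _
    have hb1 : ∀ s : ℕ, ‖ν s * a ^ s - ν s * b ^ s‖ ≤ |ν s| * (2 * R) ^ s * |a - b| := by
      intro s
      rw [← mul_sub, Real.norm_eq_abs, abs_mul, mul_assoc]
      refine mul_le_mul_of_nonneg_left ?_ (abs_nonneg _)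
      have h3 := abs_pow_sub_pow_le a b s
      have h4 : (max |a| |b|) ^ (s - 1) ≤ R ^ s :=
        (pow_le_pow_left₀ (le_max_of_le_left (abs_nonneg a)) (max_le ha hb) _).trans
          (pow_le_pow_right₀ hR (by omega))
      have h5 : (s : ℝ) ≤ 2 ^ s := by exact_mod_cast Nat.lt_two_pow_self.le
      calc |a ^ s - b ^ s| ≤ |a - b| * s * (max |a| |b|) ^ (s - 1) := h3
        _ ≤ |a - b| * 2 ^ s * R ^ s := by gcongr
        _ = (2 * R) ^ s * |a - b| := by rw [mul_pow]; ring
    have := tsum_of_norm_bounded h2 hb1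
    rwa [h1.tsum_eq, Real.norm_eq_abs] at this
  refine ⟨L + 1, |N 0| + L * R + 1, by positivity, by positivity, ?_, ?_⟩
  · intro a b ha hb
    have := key a b ha hb
    nlinarith [abs_nonneg (a - b)]
  · intro a ha
    have h1 := key a 0 ha (by simp; linarith)
    rw [sub_zero] at h1
    have h2 : L * |a| ≤ L * R := by gcongr
    have h3 := abs_sub_abs_le_abs_sub (N a) (N 0)
    linarith

/-- There are mesh-independent constants `δ, M_u > 0` such that for
every mesh with `h₁ ≤ δ`, `h₂ ≤ δ`, the solution `u⁰` of the basic problem satisfies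
`sup_{D̄} |u⁰| ≤ M_u`. -/
theorem basic_solution_uniform_bound
    (X Y : ℝ) (hX : 0 < X) (hY : 0 < Y)
    (ν : ℕ → ℝ) (N : ℝ → ℝ)
    (hN : ∀ v : ℝ, HasSum (fun s : ℕ => ν s * v ^ s) (N v))
    (f : ℝ × ℝ → ℝ) (hf : ContinuousOn f (clD X Y))
    (ψ φ : ℝ → ℝ)
    (hψc : ContinuousOn ψ (Icc 0 X))
    (hψd : ∀ x ∈ Ioo (0 : ℝ) X, DifferentiableAt ℝ ψ x)
    (hφc : ContinuousOn φ (Icc 0 Y))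
    (hφd : ∀ y ∈ Ioo (0 : ℝ) Y, DifferentiableAt ℝ φ y)
    (hcomp : ψ 0 = φ 0)
    (u : ℝ × ℝ → ℝ) (hu : GoursatSol X Y N f ψ φ u)
    (huniq : ∀ v : ℝ × ℝ → ℝ, GoursatSol X Y N f ψ φ v → ∀ p ∈ clD X Y, v p = u p) :
    ∃ δ > (0 : ℝ), ∃ Mu > (0 : ℝ), ∀ N₁ N₂ : ℕ, 1 ≤ N₁ → 1 ≤ N₂ →
      X / N₁ ≤ δ → Y / N₂ ≤ δ →
      ∀ u0 : ℝ × ℝ → ℝ, BasicSol X Y N f ψ φ N₁ N₂ u0 →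
        ∀ p ∈ clD X Y, |u0 p| ≤ Mu := by
  -- bound for `u`
  have hcomp' : IsCompact (clD X Y) := isCompact_Icc.prod isCompact_Icc
  obtain ⟨K0, hK0⟩ := hcomp'.exists_bound_of_continuousOn hu.cont
  set K : ℝ := max K0 1 with hKdef
  have hK1 : 1 ≤ K := le_max_right _ _
  have hK : ∀ p ∈ clD X Y, |u p| ≤ K := fun p hp => (hK0 p hp).trans (le_max_left _ _)
  obtain ⟨L, B, hL, hB, hLip, hBd⟩ := aux_series ν N hN (K + 1) (by linarith)
  set lam : ℝ := Real.sqrt (2 * (B + K * L)) with hlam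
  have hlam2 : lam ^ 2 = 2 * (B + K * L) := Real.sq_sqrt (by positivity)
  have hlam0 : 0 < lam := Real.sqrt_pos.2 (by positivity)
  -- uniform continuity of `N ∘ u`
  have hNu : ContinuousOn (fun p => N (u p)) (clD X Y) := by
    have hNc : ContinuousOn N (Icc (-K) K) := by
      have : LipschitzOnWith (Real.toNNReal L) N (Icc (-K) K) := by
        apply LipschitzOnWith.of_dist_le_mul
        intro a ha b hb
        rw [Real.dist_eq, Real.dist_eq, Real.coe_toNNReal _ hL.le]
        exact hLip a b ((abs_le.2 ha).trans (by linarith)) ((abs_le.2 hb).trans (by linarith))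
      exact this.continuousOn
    exact hNc.comp hu.cont (fun p hp => abs_le.1 (hK p hp))
  have huc := hcomp'.uniformContinuousOn_of_continuous hNu
  set η : ℝ := 1 / (4 * K * X * Y * Real.exp (lam * (X + Y))) with hη
  have hη0 : 0 < η := by positivity
  have hηeq : 4 * (K * η * (X * Y)) * Real.exp (lam * (X + Y)) = 1 := by
    rw [hη]; field_simp
  obtain ⟨δ', hδ', hucd⟩ := Metric.uniformContinuousOn_iff.1 huc η hη0
  refine ⟨δ' / 2, by positivity, K + 1, by positivity, ?_⟩
  intro N₁ N₂ hN1 hN2 hd1 hd2 u0 hu0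
  have hN1r : (0 : ℝ) < N₁ := by exact_mod_cast hN1
  have hN2r : (0 : ℝ) < N₂ := by exact_mod_cast hN2
  set h₁ : ℝ := X / N₁ with hh1
  set h₂ : ℝ := Y / N₂ with hh2
  have h1pos : 0 < h₁ := by positivity
  have h2pos : 0 < h₂ := by positivity
  have hXe : N₁ * h₁ = X := by rw [hh1]; field_simp
  have hYe : N₂ * h₂ = Y := by rw [hh2]; field_simp
  have hec : ContinuousOn (fun p => u0 p - u p) (clD X Y) := hu0.cont.sub hu.cont
  suffices hsmall : ∀ p ∈ clD X Y, |u0 p - u p| < 1 by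
    intro p hp
    have h1 := hsmall p hp
    have h2 := hK p hp
    have h3 := abs_sub_abs_le_abs_sub (u0 p) (u p)
    linarith
  by_contra hcon
  push Not at hcon
  -- a minimal bad point
  have hbadc : IsCompact (clD X Y ∩ (fun p => |u0 p - u p|) ⁻¹' Ici 1) :=
    hcomp'.of_isClosed_subset
      (hec.abs.preimage_isClosed_of_isClosed hcomp'.isClosed isClosed_Ici) inter_subset_left
  obtain ⟨p, ⟨hpD, hpbad⟩, hpmin⟩ := hbadc.exists_isMinOn
    (let ⟨p, hp, hb⟩ := hcon; ⟨p, hp, hb⟩)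
    (f := fun q : ℝ × ℝ => q.1 + q.2) (by fun_prop)
  obtain ⟨a, b⟩ := p
  obtain ⟨⟨ha0, haX⟩, ⟨hb0, hbY⟩⟩ := hpD
  simp only at ha0 haX hb0 hbY
  have hpbad' : 1 ≤ |u0 (a, b) - u (a, b)| := hpbad
  have hsub : ∀ {x y : ℝ}, 0 ≤ x → x ≤ a → 0 ≤ y → y ≤ b → (x, y) ∈ clD X Y :=
    fun h1 h2 h3 h4 => ⟨⟨h1, h2.trans haX⟩, ⟨h3, h4.trans hbY⟩⟩
  have hgood : ∀ x y : ℝ, 0 ≤ x → x < a → 0 ≤ y → y ≤ b → |u0 (x, y) - u (x, y)| < 1 := by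
    intro x y hx0 hxa hy0 hyb
    by_contra hge
    push Not at hge
    have : a + b ≤ x + y := hpmin (a := (x, y)) ⟨hsub hx0 hxa.le hy0 hyb, hge⟩
    linarith
  -- weighted maximum on the rectangle `[0,a] × [0,b]`
  have hrc : IsCompact (Icc 0 a ×ˢ Icc 0 b) := isCompact_Icc.prod isCompact_Icc
  have hrs : Icc 0 a ×ˢ Icc 0 b ⊆ clD X Y :=
    prod_mono (Icc_subset_Icc le_rfl haX) (Icc_subset_Icc le_rfl hbY)
  obtain ⟨⟨m, n⟩, ⟨⟨hm0, hma⟩, ⟨hn0, hnb⟩⟩, hmax⟩ := hrc.exists_isMaxOn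
    ⟨(a, b), ⟨⟨ha0, le_rfl⟩, ⟨hb0, le_rfl⟩⟩⟩
    (f := fun q : ℝ × ℝ => |u0 q - u q| * Real.exp (-(lam * (q.1 + q.2))))
    ((hec.mono hrs).abs.mul (by fun_prop))
  simp only at hm0 hma hn0 hnb
  set E : ℝ := |u0 (m, n) - u (m, n)| * Real.exp (-(lam * (m + n))) with hE
  have hE0 : 0 ≤ E := by positivity
  have hEb : ∀ x y : ℝ, 0 ≤ x → x ≤ a → 0 ≤ y → y ≤ b →
      |u0 (x, y) - u (x, y)| ≤ E * Real.exp (lam * (x + y)) := by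
    intro x y hx0 hxa hy0 hyb
    have h : |u0 (x, y) - u (x, y)| * Real.exp (-(lam * (x + y))) ≤ E :=
      hmax (a := (x, y)) ⟨⟨hx0, hxa⟩, ⟨hy0, hyb⟩⟩
    rw [Real.exp_neg, ← div_eq_mul_inv, div_le_iff₀ (Real.exp_pos _)] at h
    exact h
  -- bound on the mixed derivative of the error inside the cells
  have hmix : ∀ i ∈ Finset.Icc 1 N₁, ∀ j ∈ Finset.Icc 1 N₂, ∀ x y : ℝ,
      ((i : ℝ) - 1) * h₁ < x → x < i * h₁ → x < a →
      ((j : ℝ) - 1) * h₂ < y → y < j * h₂ → y < b →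
      HasDerivAt (fun t => u0 (t, y) - u (t, y)) (pdx u0 (x, y) - pdx u (x, y)) x ∧
      HasDerivAt (fun t => pdx u0 (x, t) - pdx u (x, t)) (pdxy u0 (x, y) - pdxy u (x, y)) y ∧
      |pdxy u0 (x, y) - pdxy u (x, y)| ≤
        (B + K * L) * E * Real.exp (lam * (x + y)) + K * η := by
    intro i hi j hj x y hx1 hx2 hxa hy1 hy2 hyb
    have hi1 : (1 : ℝ) ≤ i := by exact_mod_cast (Finset.mem_Icc.1 hi).1
    have hj1 : (1 : ℝ) ≤ j := by exact_mod_cast (Finset.mem_Icc.1 hj).1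
    have hc : (x, y) ∈ cellOp X Y N₁ N₂ i j := ⟨⟨hx1, hx2⟩, ⟨hy1, hy2⟩⟩
    set x' : ℝ := ((i : ℝ) - 1) * h₁ with hx'
    set y' : ℝ := ((j : ℝ) - 1) * h₂ with hy'
    have hx'0 : 0 ≤ x' := mul_nonneg (by linarith) h1pos.le
    have hy'0 : 0 ≤ y' := mul_nonneg (by linarith) h2pos.le
    have hxyO : (x, y) ∈ opD X Y :=
      ⟨⟨hx'0.trans_lt hx1, hxa.trans_le haX⟩, ⟨hy'0.trans_lt hy1, hyb.trans_le hbY⟩⟩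
    have hxyD : (x, y) ∈ clD X Y :=
      hsub (hx'0.trans hx1.le) hxa.le (hy'0.trans hy1.le) hyb.le
    have hnD : (x', y') ∈ clD X Y :=
      hsub hx'0 (hx1.trans hxa).le hy'0 (hy1.trans hyb).le
    refine ⟨(hu0.diffx i hi j hj _ hc).hasDerivAt.sub (hu.diffx _ hxyO).hasDerivAt,
      (hu0.diffxy i hi j hj _ hc).hasDerivAt.sub (hu.diffxy _ hxyO).hasDerivAt, ?_⟩
    have e1 : pdxy u0 (x, y) + N (u0 (x', y')) * u0 (x, y) = f (x, y) := hu0.eqn i hi j hj _ hc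
    have e2 := hu.eqn _ hxyO
    have g1 := hgood x' y' hx'0 (hx1.trans hxa) hy'0 (hy1.trans hyb).le
    have g2 : |u0 (x', y')| ≤ K + 1 := by
      have h2 := hK _ hnD
      have h3 := abs_sub_abs_le_abs_sub (u0 (x', y')) (u (x', y'))
      linarith
    have g3 := hBd _ g2
    have g4 := hLip _ _ g2 ((hK _ hnD).trans (by linarith))
    have g5 : |N (u (x', y')) - N (u (x, y))| ≤ η := by
      have := hucd (x', y') hnD (x, y) hxyD ?_
      · exact (Real.dist_eq _ _ ▸ this).le
      · rw [Prod.dist_eq]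
        refine max_lt ?_ ?_
        · simp only [Real.dist_eq]
          rw [abs_sub_comm, abs_of_pos (by linarith)]
          have : (i : ℝ) * h₁ = x' + h₁ := by rw [hx']; ring
          linarith
        · simp only [Real.dist_eq]
          rw [abs_sub_comm, abs_of_pos (by linarith)]
          have : (j : ℝ) * h₂ = y' + h₂ := by rw [hy']; ring
          linarith
    have g6 := hEb x y (hx'0.trans hx1.le) hxa.le (hy'0.trans hy1.le) hyb.le
    have g7 : |u0 (x', y') - u (x', y')| ≤ E * Real.exp (lam * (x + y)) := by
      refine (hEb x' y' hx'0 (hx1.trans hxa).le hy'0 (hy1.trans hyb).le).trans ?_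
      gcongr
    have g8 := hK _ hxyD
    have e3 : pdxy u0 (x, y) - pdxy u (x, y) =
        -(N (u0 (x', y')) * (u0 (x, y) - u (x, y)) +
          u (x, y) * (N (u0 (x', y')) - N (u (x', y'))) +
          u (x, y) * (N (u (x', y')) - N (u (x, y)))) := by linarith
    rw [e3, abs_neg]
    set W := Real.exp (lam * (x + y)) with hW
    calc _ ≤ |N (u0 (x', y'))| * |u0 (x, y) - u (x, y)| +
          |u (x, y)| * |N (u0 (x', y')) - N (u (x', y'))| +
          |u (x, y)| * |N (u (x', y')) - N (u (x, y))| := by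
          rw [← abs_mul, ← abs_mul, ← abs_mul]; exact abs_add_three _ _ _
      _ ≤ B * (E * W) + K * (L * (E * W)) + K * η := by
          have : |N (u0 (x', y')) - N (u (x', y'))| ≤ L * (E * W) :=
            g4.trans (mul_le_mul_of_nonneg_left g7 hL.le)
          gcongr
      _ = _ := by ring
  -- comparison function
  have hcmp : ∀ σ : ℝ, |σ| = 1 → σ * (u0 (m, n) - u (m, n)) ≤
      E / 2 * Real.exp (lam * (m + n)) + K * η * (X * Y) := by
    intro σ hσ
    have hM := aux_mesh
      (fun q => E / 2 * (Real.exp (lam * q.1) * Real.exp (lam * q.2)) + K * η * (q.1 * q.2)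
        - σ * (u0 q - u q))
      (fun q => E / 2 * (Real.exp (lam * q.1) * lam * Real.exp (lam * q.2)) + K * η * q.2
        - σ * (pdx u0 q - pdx u q))
      (fun q => E / 2 * (Real.exp (lam * q.1) * lam * (Real.exp (lam * q.2) * lam)) + K * η
        - σ * (pdxy u0 q - pdxy u q))
      h₁ h₂ m n h1pos.le h2pos.le N₁ N₂ hm0 hn0 (by linarith) (by linarith) ?_ ?_
    · have z1 : u0 (m, 0) - u (m, 0) = 0 := by
        rw [hu0.bc1 m ⟨hm0, hma.trans haX⟩, hu.bc1 m ⟨hm0, hma.trans haX⟩, sub_self]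
      have z2 : u0 (0, 0) - u (0, 0) = 0 := by
        rw [hu0.bc1 0 ⟨le_rfl, hX.le⟩, hu.bc1 0 ⟨le_rfl, hX.le⟩, sub_self]
      have z3 : u0 (0, n) - u (0, n) = 0 := by
        rw [hu0.bc2 n ⟨hn0, hnb.trans hbY⟩, hu.bc2 n ⟨hn0, hnb.trans hbY⟩, sub_self]
      simp only [z1, z2, z3, mul_zero, zero_mul, Real.exp_zero, mul_one, one_mul, sub_zero,
        add_zero] at hM
      have w1 : 1 ≤ Real.exp (lam * m) := Real.one_le_exp (by positivity)
      have w2 : 1 ≤ Real.exp (lam * n) := Real.one_le_exp (by positivity)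
      have w3 : K * η * (m * n) ≤ K * η * (X * Y) := by
        have : m * n ≤ X * Y := mul_le_mul (hma.trans haX) (hnb.trans hbY) hn0 hX.le
        gcongr
      rw [mul_add, Real.exp_add]
      have w4 : 0 ≤ E / 2 * (Real.exp (lam * m) - 1) :=
        mul_nonneg (by linarith) (by linarith)
      have w5 : 0 ≤ E / 2 * (Real.exp (lam * n) - 1) :=
        mul_nonneg (by linarith) (by linarith)
      linarith
    · refine ContinuousOn.sub (by fun_prop) (continuousOn_const.mul (hec.mono ?_))
      exact prod_mono (Icc_subset_Icc le_rfl (hma.trans haX))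
        (Icc_subset_Icc le_rfl (hnb.trans hbY))
    · intro i hi j hj x y hx1 hx2 hxm hy1 hy2 hyn
      obtain ⟨d1, d2, d3⟩ := hmix i hi j hj x y hx1 hx2 (hxm.trans_le hma) hy1 hy2
        (hyn.trans_le hnb)
      have dexp : ∀ t : ℝ, HasDerivAt (fun t => Real.exp (lam * t)) (Real.exp (lam * t) * lam) t := by
        intro t
        simpa using ((hasDerivAt_id t).const_mul lam).exp
      refine ⟨?_, ?_, ?_⟩
      · have := ((((dexp x).mul_const (Real.exp (lam * y))).const_mul (E / 2)).add
          (((hasDerivAt_id x).mul_const y).const_mul (K * η))).sub (d1.const_mul σ)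
        simp only [id_eq, one_mul] at this
        exact this
      · have := ((((dexp y).const_mul (Real.exp (lam * x) * lam)).const_mul (E / 2)).add
          ((hasDerivAt_id y).const_mul (K * η))).sub (d2.const_mul σ)
        simp only [id_eq, mul_one] at this
        exact this
      · have s1 : σ * (pdxy u0 (x, y) - pdxy u (x, y)) ≤ |pdxy u0 (x, y) - pdxy u (x, y)| := by
          refine (le_abs_self _).trans ?_
          rw [abs_mul, hσ, one_mul]
        have s2 : E / 2 * (Real.exp (lam * x) * lam * (Real.exp (lam * y) * lam)) =
            (B + K * L) * E * Real.exp (lam * (x + y)) := by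
          rw [mul_add lam x y, Real.exp_add]
          linear_combination (E / 2 * Real.exp (lam * x) * Real.exp (lam * y)) * hlam2
        simp only [s2]
        linarith
  -- conclusion
  have hcA : |u0 (m, n) - u (m, n)| ≤ E / 2 * Real.exp (lam * (m + n)) + K * η * (X * Y) := by
    have c1 := hcmp 1 (by simp)
    have c2 := hcmp (-1) (by simp)
    exact abs_le.2 ⟨by linarith, by linarith⟩
  have hEe : E * Real.exp (lam * (m + n)) = |u0 (m, n) - u (m, n)| := by
    rw [hE, mul_assoc, ← Real.exp_add]; simp
  have hE2 : E ≤ 2 * (K * η * (X * Y)) := by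
    have w1 : 1 ≤ Real.exp (lam * (m + n)) := Real.one_le_exp (by positivity)
    nlinarith
  have hfin := hEb a b ha0 le_rfl hb0 le_rfl
  have hexp : Real.exp (lam * (a + b)) ≤ Real.exp (lam * (X + Y)) := by gcongr
  have hlast : E * Real.exp (lam * (a + b)) ≤
      2 * (K * η * (X * Y)) * Real.exp (lam * (X + Y)) := by gcongr
  linarith
end
end
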